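/- Let ω be a nonweak simple game with ∅ ∉ ω. Then ω cannot be both δ-computable and a prefilter. -/

import Mathlib

/-!
The game must contain a finite coalition, which prefilters on an empty intersection cannot have.

Let `f` be a partial recursive extension of the δ-indicator. By Kleene's recursion theorem there is a
program `c` which knows its own index `e` and outputs `1` at `x` unless the computation of `f e` has
been seen, within `x` steps, to halt with value `1`, in which case it outputs `0`. So `c` decides a
set `S`. If `S` were losing, `f e = 0`, so `c` would always output `1` and `S = ℕ`, which is
winning. Hence `S` is winning, `f e = 1` is seen after finitely many steps, and `S` is finite
(`exists_finite_winning`).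

As the game is nonweak, every `i ∈ S` is missing from some winning coalition `T i`. Then `S`
together with the finitely many `T i`, `i ∈ S`, has empty intersection, contrary to the finite
intersection property.
-/


open Classical in
/-- `e` is a characteristic index for `S`: the `e`-th partial recursive function
is the (total, 0-1 valued) characteristic function of `S`. -/
def CharIndex (e : ℕ) (S : Set ℕ) : Prop :=
  ∀ x : ℕ, (Denumerable.ofNat Nat.Partrec.Code e).eval x =
    Part.some (if x ∈ S then 1 else 0)

/-- A recursive (computable) coalition: a set of players with a characteristic index. -/
def RecSet (S : Set ℕ) : Prop := ∃ e, CharIndex e S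

open Classical in
/-- The simple game `ω` is δ-computable: its δ-indicator has an extension to a
partial recursive function. -/
def DeltaComputable (ω : Set (Set ℕ)) : Prop :=
  ∃ f : ℕ →. ℕ, Nat.Partrec f ∧
    ∀ e S, CharIndex e S → f e = Part.some (if S ∈ ω then 1 else 0)

/-- `ω` is a prefilter: monotonic (within recursive coalitions), contains `ℕ`,
misses `∅`, and every finite subfamily of winning coalitions has nonempty
intersection. -/
def Prefilter (ω : Set (Set ℕ)) : Prop :=
  (∀ S ∈ ω, ∀ T : Set ℕ, RecSet T → S ⊆ T → T ∈ ω) ∧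
  Set.univ ∈ ω ∧ ∅ ∉ ω ∧
  ∀ ω' ⊆ ω, ω'.Finite → ⋂₀ ω' ≠ ∅

open Nat.Partrec in
/-- A δ-computable game in which the grand coalition wins has a finite winning coalition. -/
theorem exists_finite_winning (ω : Set (Set ℕ)) (hω : DeltaComputable ω)
    (huniv : Set.univ ∈ ω) : ∃ S ∈ ω, S.Finite := by
  classical
  obtain ⟨f, hf, hδ⟩ := hω
  obtain ⟨cf, rfl⟩ := Code.exists_code.1 hf
  have hp : Primrec₂ fun (c : Code) (x : ℕ) =>
      if Code.evaln x cf (Encodable.encode c) = some 1 then 0 else 1 := by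
    refine Primrec.ite (Primrec.eq.comp (Code.primrec_evaln.comp
      ((Primrec.snd.pair (Primrec.const cf)).pair (Primrec.encode.comp Primrec.fst)))
      (Primrec.const _)) (Primrec.const 0) (Primrec.const 1)
  obtain ⟨c, hc⟩ := Code.fixed_point₂ (f := fun c x => Part.some
    (if Code.evaln x cf (Encodable.encode c) = some 1 then 0 else 1)) hp.to_comp.partrec₂
  let S : Set ℕ := {x | Code.evaln x cf (Encodable.encode c) ≠ some 1}
  have hS : CharIndex (Encodable.encode c) S := by
    intro x
    rw [Denumerable.ofNat_encode, hc]
    by_cases h : Code.evaln x cf (Encodable.encode c) = some 1 <;> simp [S, h]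
  have hval := hδ _ _ hS
  have hwin : S ∈ ω := by
    by_contra hlose
    -- no stage of the computation can show the value `1`, so `S` is everything
    have hS_univ : S = Set.univ := by
      refine Set.eq_univ_of_forall fun x hx => ?_
      have h1 := Code.evaln_sound (Option.mem_def.2 hx)
      rw [hval, if_neg hlose] at h1
      simp at h1
    exact hlose (hS_univ ▸ huniv)
  have h1 : 1 ∈ cf.eval (Encodable.encode c) := by
    rw [hval, if_pos hwin]
    exact Part.mem_some 1
  obtain ⟨k, hk⟩ := Code.evaln_complete.1 h1
  refine ⟨S, hwin, (Set.finite_Iio k).subset fun x hx => ?_⟩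
  by_contra hkx
  exact hx (Code.evaln_mono (not_lt.1 hkx) hk)

/-- A nonweak simple game cannot be both δ-computable and a prefilter. -/
theorem stmt15 (ω : Set (Set ℕ)) (hgame : ∀ S ∈ ω, RecSet S)
    (hempty : ∅ ∉ ω) (hnonweak : ω.Nonempty ∧ ⋂₀ ω = ∅) :
    ¬ (DeltaComputable ω ∧ Prefilter ω) := by
  rintro ⟨hδ, -, huniv, -, hfip⟩
  obtain ⟨S, hS, hfin⟩ := exists_finite_winning ω hδ huniv
  have hmiss : ∀ i : ℕ, ∃ T ∈ ω, i ∉ T := by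
    intro i
    have hi : i ∉ ⋂₀ ω := by simp [hnonweak.2]
    simpa [Set.mem_sInter] using hi
  choose T hT hiT using hmiss
  refine hfip (insert S (T '' S)) ?_ ((hfin.image T).insert S) ?_
  · rintro A (rfl | ⟨i, -, rfl⟩)
    exacts [hS, hT i]
  · refine Set.eq_empty_of_forall_notMem fun i hi => ?_
    have hiS : i ∈ S := hi S (Set.mem_insert _ _)
    exact hiT i (hi (T i) (Set.mem_insert_of_mem _ (Set.mem_image_of_mem T hiS)))
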